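/- arXiv:2102.02405 — 2 statements merged into one kernel-verified Lean document; each statement's English description precedes it below -/
import Mathlib

section
/- Let 1 ≤ i ≤ n and let 1 ≤ k ≤ n-1 with k ≠ i-1 and k ≠ i. If F' is a complete flag in ℂ^n whose m-th subspace agrees with the m-th subspace of F_i for every m ≠ k, then F' lies in the K-orbit of F_i. (In the language of the paper: the simple root α_k is compact for the closed K-orbit Q_i = K·F_i.) -/
open Module Submodule

noncomputable section

/-- `stdVec n m` is the `m`-th standard basis vector of `ℂ^n` (1-indexed); `0` out of range. -/
def stdVec (n m : ℕ) : Fin n → ℂ :=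
  if h : 1 ≤ m ∧ m ≤ n then Pi.single (⟨m - 1, by omega⟩ : Fin n) 1 else 0

/-- `stdSub n k` is the subspace `U_k = span(e_1, …, e_k)` of `ℂ^n`. -/
def stdSub (n k : ℕ) : Submodule ℂ (Fin n → ℂ) :=
  span ℂ (stdVec n '' Set.Icc 1 k)

/-- The action of an invertible linear map of `ℂ^n` on a chain of subspaces. -/
def actFlag (n : ℕ) (g : (Fin n → ℂ) ≃ₗ[ℂ] (Fin n → ℂ))
    (V : ℕ → Submodule ℂ (Fin n → ℂ)) (k : ℕ) : Submodule ℂ (Fin n → ℂ) :=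
  Submodule.map g.toLinearMap (V k)

/-- The orbit of the chain `V` under a set `B` of invertible linear maps. -/
def orbitOf (n : ℕ) (B : Set ((Fin n → ℂ) ≃ₗ[ℂ] (Fin n → ℂ)))
    (V : ℕ → Submodule ℂ (Fin n → ℂ)) : Set (ℕ → Submodule ℂ (Fin n → ℂ)) :=
  {V' | ∃ b ∈ B, actFlag n b V = V'}

/-- A complete flag in `ℂ^n`: `V k` is the `k`-dimensional member for `0 ≤ k ≤ n`;
values above `n` are pinned so that two flags are equal iff they agree in degrees `≤ n`. -/
def IsCompleteFlag (n : ℕ) (V : ℕ → Submodule ℂ (Fin n → ℂ)) : Prop :=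
  (∀ k, k ≤ n → finrank ℂ ↥(V k) = k) ∧ (∀ k, V k ≤ V (k + 1)) ∧ (∀ k, n ≤ k → V k = V n)

/-- The complete flag `(v 1 ⊂ v 2 ⊂ ⋯ ⊂ v n)` spanned by the vectors `v 1, …, v n`. -/
def flagOf (n : ℕ) (v : ℕ → Fin n → ℂ) (k : ℕ) : Submodule ℂ (Fin n → ℂ) :=
  span ℂ (v '' Set.Icc 1 (min k n))

/-- `K = {g ∈ GL(n,ℂ) : g e_n = e_n, g U_{n-1} = U_{n-1}}`, a copy of `GL(n-1,ℂ)`. -/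
def Ksub (n : ℕ) : Set ((Fin n → ℂ) ≃ₗ[ℂ] (Fin n → ℂ)) :=
  {g | g (stdVec n n) = stdVec n n ∧
       Submodule.map g.toLinearMap (stdSub n (n - 1)) = stdSub n (n - 1)}

/-- `V'` lies in the `K`-orbit of `V`. -/
def InKOrbit (n : ℕ) (V V' : ℕ → Submodule ℂ (Fin n → ℂ)) : Prop :=
  ∃ g ∈ Ksub n, actFlag n g V = V'

/-- Vectors of the representative flags: for `i = j` this gives the flag `F_i`
`(e_1 ⊂ ⋯ ⊂ e_{i-1} ⊂ e_n ⊂ e_i ⊂ ⋯ ⊂ e_{n-1})` (`e_n` in position `i`), and for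
`i < j` the flag `F_{i,j}`
`(e_1 ⊂ ⋯ ⊂ e_{i-1} ⊂ e_i + e_n ⊂ e_{i+1} ⊂ ⋯ ⊂ e_{j-1} ⊂ e_n ⊂ e_j ⊂ ⋯ ⊂ e_{n-1})`. -/
def repVec (n i j m : ℕ) : Fin n → ℂ :=
  if m < i then stdVec n m
  else if m = i then (if i < j then stdVec n i else 0) + stdVec n n
  else if m < j then stdVec n m
  else if m = j then stdVec n n
  else stdVec n (m - 1)

/-- `repFlag n i i = F_i` and `repFlag n i j = F_{i,j}` for `i < j`. -/
def repFlag (n i j : ℕ) : ℕ → Submodule ℂ (Fin n → ℂ) := flagOf n (repVec n i j)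

/-- The linear map acting by a 2x2 matrix on coordinates `a, b` and fixing the others. -/
def blockMap {n : ℕ} (a b : Fin n) (α β γ δ : ℂ) : (Fin n → ℂ) →ₗ[ℂ] (Fin n → ℂ) where
  toFun x j := if j = a then α * x a + γ * x b else if j = b then β * x a + δ * x b else x j
  map_add' x y := by
    ext j
    simp only [Pi.add_apply]
    split_ifs <;> ring
  map_smul' c x := by
    ext j
    simp only [Pi.smul_apply, smul_eq_mul, RingHom.id_apply]
    split_ifs <;> ring

lemma blockMap_comp {n : ℕ} (a b : Fin n) (hab : a ≠ b) (α β γ δ : ℂ)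
    (h : α * δ - β * γ = 1) :
    (blockMap a b α β γ δ).comp (blockMap a b δ (-β) (-γ) α) = LinearMap.id := by
  refine LinearMap.ext fun x => funext fun j => ?_
  simp only [blockMap, LinearMap.comp_apply, LinearMap.coe_mk, AddHom.coe_mk, LinearMap.id_apply]
  by_cases h1 : j = a
  · subst h1
    simp only [if_true, if_neg hab.symm]
    linear_combination x j * h
  · by_cases h2 : j = b
    · subst h2
      simp only [if_true, if_neg h1]
      linear_combination x j * h
    · simp [h1, h2]

lemma exists_block (n a b : ℕ) (ha : 1 ≤ a ∧ a ≤ n) (hb : 1 ≤ b ∧ b ≤ n) (hab : a ≠ b)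
    (α β γ δ : ℂ) (h : α * δ - β * γ = 1) :
    ∃ g : (Fin n → ℂ) ≃ₗ[ℂ] (Fin n → ℂ),
      g (stdVec n a) = α • stdVec n a + β • stdVec n b ∧
      g (stdVec n b) = γ • stdVec n a + δ • stdVec n b ∧
      ∀ m, m ≠ a → m ≠ b → g (stdVec n m) = stdVec n m := by
  set a' : Fin n := ⟨a - 1, by omega⟩ with ha'
  set b' : Fin n := ⟨b - 1, by omega⟩ with hb'
  have hab' : a' ≠ b' := by
    simp only [ha', hb', ne_eq, Fin.mk.injEq]
    omega
  have e1 : stdVec n a = Pi.single a' 1 := by simp [stdVec, ha, ha']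
  have e2 : stdVec n b = Pi.single b' 1 := by simp [stdVec, hb, hb']
  refine ⟨LinearEquiv.ofLinearMap (blockMap a' b' α β γ δ) (blockMap a' b' δ (-β) (-γ) α)
    (blockMap_comp a' b' hab' _ _ _ _ h) ?_, ?_, ?_, ?_⟩
  · have := blockMap_comp a' b' hab' δ (-β) (-γ) α (by linear_combination h)
    simpa using this
  · rw [e1, e2]
    clear e1 e2 ha' hb'
    clear_value a' b'
    ext j
    by_cases h1 : j = a' <;> by_cases h2 : j = b' <;>
      simp_all [blockMap, Pi.single_apply, hab'.symm]
  · rw [e1, e2]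
    clear e1 e2 ha' hb'
    clear_value a' b'
    ext j
    by_cases h1 : j = a' <;> by_cases h2 : j = b' <;>
      simp_all [blockMap, Pi.single_apply, hab'.symm]
  · intro m hma hmb
    by_cases hm : 1 ≤ m ∧ m ≤ n
    · have e3 : stdVec n m = Pi.single (⟨m - 1, by omega⟩ : Fin n) 1 := by simp [stdVec, hm]
      have n1 : a' ≠ (⟨m - 1, by omega⟩ : Fin n) := by
        simp only [ha', ne_eq, Fin.mk.injEq]; omega
      have n2 : b' ≠ (⟨m - 1, by omega⟩ : Fin n) := by
        simp only [hb', ne_eq, Fin.mk.injEq]; omega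
      rw [e3]
      generalize (⟨m - 1, by omega⟩ : Fin n) = c at n1 n2
      ext j
      by_cases h1 : j = a' <;> by_cases h2 : j = b' <;>
        simp_all [blockMap, Pi.single_apply]
    · have e3 : stdVec n m = 0 := by simp only [stdVec, dif_neg hm]
      rw [e3, map_zero]

lemma map_eq_of_le {n : ℕ} (g : (Fin n → ℂ) ≃ₗ[ℂ] (Fin n → ℂ))
    (W V : Submodule ℂ (Fin n → ℂ)) (h : Submodule.map g.toLinearMap W ≤ V)
    (hd : finrank ℂ V ≤ finrank ℂ W) : Submodule.map g.toLinearMap W = V := by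
  apply Submodule.eq_of_le_of_finrank_le h
  have := LinearEquiv.finrank_map_eq g W
  exact hd.trans this.ge

lemma flagOf_succ (n : ℕ) (v : ℕ → Fin n → ℂ) (m : ℕ) (hm : m + 1 ≤ n) :
    flagOf n v (m + 1) = flagOf n v m ⊔ span ℂ {v (m + 1)} := by
  have : Set.Icc 1 (m + 1) = Set.Icc 1 m ∪ {m + 1} := by
    ext x
    simp only [Set.mem_Icc, Set.mem_union, Set.mem_singleton_iff]
    omega
  rw [flagOf, flagOf, min_eq_left hm, min_eq_left (by omega), this, Set.image_union,
    Set.image_singleton, span_union]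

/-- The index of the standard vector in position `l` of `F_i`. -/
def posIdx (n i l : ℕ) : ℕ := if l < i then l else if l = i then n else l - 1

lemma repVec_eq (n i l : ℕ) : repVec n i i l = stdVec n (posIdx n i l) := by
  unfold repVec posIdx
  split_ifs <;> simp_all

lemma mem_flagOf (n : ℕ) (v : ℕ → Fin n → ℂ) (l m : ℕ) (h1 : 1 ≤ l) (h2 : l ≤ m) (h3 : l ≤ n) :
    v l ∈ flagOf n v m :=
  subset_span ⟨l, ⟨h1, le_min h2 h3⟩, rfl⟩

/-- If a complete flag agrees with `F_i` in every degree `m ≠ k`, where `1 ≤ k ≤ n-1`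
and `k ∉ {i-1, i}`, then it lies in the `K`-orbit of `F_i`
(the simple root `α_k` is compact for the closed orbit `Q_i = K·F_i`). -/
theorem stmt_13 (n : ℕ) (hn : 2 ≤ n) (i k : ℕ) (hi1 : 1 ≤ i) (hin : i ≤ n)
    (hk1 : 1 ≤ k) (hkn : k ≤ n - 1) (hki : k ≠ i - 1) (hki' : k ≠ i)
    (V : ℕ → Submodule ℂ (Fin n → ℂ)) (hV : IsCompleteFlag n V)
    (hagree : ∀ m, m ≠ k → V m = repFlag n i i m) :
    InKOrbit n (repFlag n i i) V := by
  obtain ⟨hdim, hle, -⟩ := hV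
  obtain ⟨p, rfl⟩ : ∃ p, k = p + 1 := ⟨k - 1, by omega⟩
  set v := repVec n i i with hv
  have hVp : V p = flagOf n v p := hagree p (by omega)
  have hVq : V (p + 2) = flagOf n v (p + 2) := hagree (p + 2) (by omega)
  have hs1 := flagOf_succ n v p (by omega)
  have hs2 := flagOf_succ n v (p + 1) (by omega)
  -- the new line in degree k
  obtain ⟨α, β, hne, hmem⟩ : ∃ α β : ℂ, (α ≠ 0 ∨ β ≠ 0) ∧
      α • v (p + 1) + β • v (p + 2) ∈ V (p + 1) := by
    have hnot : ¬ V (p + 1) ≤ V p := by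
      intro hc
      have := Submodule.finrank_mono hc
      rw [hdim _ (by omega), hdim _ (by omega)] at this
      omega
    obtain ⟨x, hx, hxn⟩ := SetLike.not_le_iff_exists.mp hnot
    have hx2 : x ∈ V (p + 2) := hle (p + 1) hx
    rw [hVq, hs2, hs1, mem_sup] at hx2
    obtain ⟨y, hy, z, hz, rfl⟩ := hx2
    rw [mem_sup] at hy
    obtain ⟨y, hy, t, ht, rfl⟩ := hy
    obtain ⟨α, rfl⟩ := mem_span_singleton.mp ht
    obtain ⟨β, rfl⟩ := mem_span_singleton.mp hz
    rw [← hVp] at hy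
    refine ⟨α, β, ?_, ?_⟩
    · by_contra! hc
      apply hxn
      simpa [hc.1, hc.2] using hy
    · have := (V (p + 1)).sub_mem hx (hle p hy)
      convert this using 1
      abel
  obtain ⟨γ, δ, hdet⟩ : ∃ γ δ : ℂ, α * δ - β * γ = 1 := by
    rcases hne with h | h
    · exact ⟨0, α⁻¹, by field_simp; simp⟩
    · exact ⟨-β⁻¹, 0, by field_simp; simp⟩
  have ha : 1 ≤ posIdx n i (p + 1) ∧ posIdx n i (p + 1) ≤ n - 1 := by
    unfold posIdx; split_ifs <;> omega
  have hb : 1 ≤ posIdx n i (p + 2) ∧ posIdx n i (p + 2) ≤ n - 1 := by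
    unfold posIdx; split_ifs <;> omega
  have hab : posIdx n i (p + 1) ≠ posIdx n i (p + 2) := by
    unfold posIdx; split_ifs <;> omega
  obtain ⟨g, hga, hgb, hg⟩ := exists_block n (posIdx n i (p + 1)) (posIdx n i (p + 2))
    ⟨ha.1, by omega⟩ ⟨hb.1, by omega⟩ hab α β γ δ hdet
  have hga' : g (v (p + 1)) = α • v (p + 1) + β • v (p + 2) := by
    simpa only [hv, repVec_eq] using hga
  have hgb' : g (v (p + 2)) = γ • v (p + 1) + δ • v (p + 2) := by
    simpa only [hv, repVec_eq] using hgb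
  have hg' : ∀ l, 1 ≤ l → l ≤ n → l ≠ p + 1 → l ≠ p + 2 → g (v l) = v l := by
    intro l h1 h2 h3 h4
    simp only [hv, repVec_eq]
    apply hg <;> unfold posIdx <;> split_ifs <;> omega
  refine ⟨g, ⟨hg n (by omega) (by omega), ?_⟩, ?_⟩
  · apply map_eq_of_le _ _ _ _ le_rfl
    have hin' : ∀ m, 1 ≤ m → m ≤ n - 1 → stdVec n m ∈ stdSub n (n - 1) :=
      fun m h1 h2 => subset_span ⟨m, ⟨h1, h2⟩, rfl⟩
    rw [Submodule.map_le_iff_le_comap]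
    conv_lhs => rw [stdSub]
    rw [span_le]
    rintro _ ⟨m, ⟨hm1, hm2⟩, rfl⟩
    change g (stdVec n m) ∈ stdSub n (n - 1)
    by_cases h1 : m = posIdx n i (p + 1)
    · rw [h1, hga]
      exact add_mem (smul_mem _ _ (hin' _ ha.1 ha.2)) (smul_mem _ _ (hin' _ hb.1 hb.2))
    · by_cases h2 : m = posIdx n i (p + 2)
      · rw [h2, hgb]
        exact add_mem (smul_mem _ _ (hin' _ ha.1 ha.2)) (smul_mem _ _ (hin' _ hb.1 hb.2))
      · rw [hg m h1 h2]
        exact hin' m hm1 hm2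
  · funext m
    change Submodule.map g.toLinearMap (flagOf n v m) = V m
    have key : ∀ S : Submodule ℂ (Fin n → ℂ),
        (∀ l, 1 ≤ l → l ≤ m → l ≤ n → g (v l) ∈ S) →
        Submodule.map g.toLinearMap (flagOf n v m) ≤ S := by
      intro S hS
      rw [Submodule.map_le_iff_le_comap, flagOf, span_le]
      rintro _ ⟨l, ⟨hl1, hl2⟩, rfl⟩
      exact hS l hl1 (hl2.trans (min_le_left _ _)) (hl2.trans (min_le_right _ _))
    by_cases hm : m = p + 1
    · subst hm
      apply map_eq_of_le
      · apply key
        intro l h1 h2 h3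
        by_cases h4 : l = p + 1
        · rw [h4, hga']
          exact hmem
        · rw [hg' l h1 h3 h4 (by omega)]
          apply hle p
          rw [hVp]
          exact mem_flagOf n v l p h1 (by omega) h3
      · rw [hdim _ (by omega)]
        have h1 := hdim (p + 2) (by omega)
        rw [hVq, hs2] at h1
        have h2 := Submodule.finrank_add_le_finrank_add_finrank (flagOf n v (p + 1))
          (span ℂ {v (p + 1 + 1)})
        have h3 : finrank ℂ (span ℂ {v (p + 1 + 1)}) ≤ 1 := by
          simpa using finrank_span_le_card (R := ℂ) ({v (p + 1 + 1)} : Set (Fin n → ℂ))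
        omega
    · have hVm : V m = flagOf n v m := hagree m hm
      rw [hVm]
      apply map_eq_of_le _ _ _ _ le_rfl
      apply key
      intro l h1 h2 h3
      by_cases h4 : l = p + 1
      · rw [h4, hga']
        exact add_mem (smul_mem _ _ (mem_flagOf n v _ _ (by omega) (by omega) (by omega)))
          (smul_mem _ _ (mem_flagOf n v _ _ (by omega) (by omega) (by omega)))
      · by_cases h5 : l = p + 2
        · rw [h5, hgb']
          exact add_mem (smul_mem _ _ (mem_flagOf n v _ _ (by omega) (by omega) (by omega)))
            (smul_mem _ _ (mem_flagOf n v _ _ (by omega) (by omega) (by omega)))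
        · rw [hg' l h1 h3 h4 h5]
          exact mem_flagOf n v l m h1 h2 h3
end
end

section
/- If F' is a maximal isotropic flag in ℂ^{2l} whose m-th subspace agrees with the m-th subspace of the standard flag F_l = (e_1 ⊂ ⋯ ⊂ e_l) for every m ≠ l-1, then either F' = F_l or F' lies in the K-orbit of F_{l-1} = (e_1 ⊂ ⋯ ⊂ e_{l-2} ⊂ e_l ⊂ e_{l-1}); moreover both possibilities occur. (This realizes set-theoretically that α_{l-1} is complex stable for the closed K-orbit Q_+ = K·F_l and that m(s_{α_{l-1}})*Q_+ = Q_{l-1} = K·F_{l-1}.) -/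
open Module Submodule

noncomputable section

/-- The symmetric bilinear form `β(x,y) = ∑_{k=1}^n x_k y_{n+1-k}` on `ℂ^n`. -/
def betaF (n : ℕ) (x y : Fin n → ℂ) : ℂ := ∑ k : Fin n, x k * y k.rev

/-- `SO(n,ℂ)` for the form `β`. -/
def SOgrp (n : ℕ) : Set ((Fin n → ℂ) ≃ₗ[ℂ] (Fin n → ℂ)) :=
  {g | LinearMap.det g.toLinearMap = 1 ∧ ∀ x y, betaF n (g x) (g y) = betaF n x y}

/-- A maximal isotropic flag `V 1 ⊂ ⋯ ⊂ V l` in `ℂ^n` (values pinned outside `1..l`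
so that two flags are equal iff they agree in degrees `1, …, l`). -/
def IsIsoFlag (n l : ℕ) (V : ℕ → Submodule ℂ (Fin n → ℂ)) : Prop :=
  (∀ i, i ≤ l → finrank ℂ ↥(V i) = i) ∧ (∀ i, V i ≤ V (i + 1)) ∧ (∀ i, l ≤ i → V i = V l) ∧
    (∀ u ∈ V l, ∀ w ∈ V l, betaF n u w = 0)

/-- The isotropic flag `(v 1 ⊂ ⋯ ⊂ v l)` spanned by `v 1, …, v l`. -/
def isoFlagOf (n l : ℕ) (v : ℕ → Fin n → ℂ) (k : ℕ) : Submodule ℂ (Fin n → ℂ) :=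
  span ℂ (v '' Set.Icc 1 (min k l))

/-- `K = {g ∈ SO(2l) : g (e_l - e_{-l}) = e_l - e_{-l}}` (here `e_{-l} = e_{l+1}`),
a copy of `SO(2l-1)`. -/
def Keven (l : ℕ) : Set ((Fin (2 * l) → ℂ) ≃ₗ[ℂ] (Fin (2 * l) → ℂ)) :=
  {g | g ∈ SOgrp (2 * l) ∧
       g (stdVec (2 * l) l - stdVec (2 * l) (l + 1)) =
         stdVec (2 * l) l - stdVec (2 * l) (l + 1)}

/-- `V'` lies in the `K`-orbit of `V`. -/
def InKEvenOrbit (l : ℕ) (V V' : ℕ → Submodule ℂ (Fin (2 * l) → ℂ)) : Prop :=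
  ∃ g ∈ Keven l, actFlag (2 * l) g V = V'

/-- `F_i = (e_1 ⊂ ⋯ ⊂ e_{i-1} ⊂ e_l ⊂ e_i ⊂ ⋯ ⊂ e_{l-1})` (`e_l` in position `i`). -/
def repEVec (l i m : ℕ) : Fin (2 * l) → ℂ :=
  if m < i then stdVec (2 * l) m
  else if m = i then stdVec (2 * l) l
  else stdVec (2 * l) (m - 1)

def repEFlag (l i : ℕ) : ℕ → Submodule ℂ (Fin (2 * l) → ℂ) :=
  isoFlagOf (2 * l) l (repEVec l i)


theorem betaF_add_left' (n : ℕ) (x y z : Fin n → ℂ) :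
    betaF n (x + y) z = betaF n x z + betaF n y z := by
  simp [betaF, add_mul, Finset.sum_add_distrib]

theorem betaF_smul_left' (n : ℕ) (c : ℂ) (x z : Fin n → ℂ) :
    betaF n (c • x) z = c * betaF n x z := by
  simp [betaF, Finset.mul_sum, mul_assoc]

theorem betaF_symm' (n : ℕ) (x y : Fin n → ℂ) : betaF n x y = betaF n y x := by
  unfold betaF
  rw [← Equiv.sum_comp Fin.revPerm]
  simp [mul_comm]

theorem betaF_add_right' (n : ℕ) (x y z : Fin n → ℂ) :
    betaF n z (x + y) = betaF n z x + betaF n z y := by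
  rw [betaF_symm', betaF_add_left', betaF_symm' n x, betaF_symm' n y]

theorem betaF_smul_right' (n : ℕ) (c : ℂ) (x z : Fin n → ℂ) :
    betaF n z (c • x) = c * betaF n z x := by
  rw [betaF_symm', betaF_smul_left', betaF_symm' n x]

/-- The functional `β(·, y)`. -/
def betaFun (n : ℕ) (y : Fin n → ℂ) : (Fin n → ℂ) →ₗ[ℂ] ℂ where
  toFun x := betaF n x y
  map_add' a b := betaF_add_left' n a b y
  map_smul' c a := by simp [betaF_smul_left']

theorem exists_eichler (n : ℕ) (u w : Fin n → ℂ) (q : ℂ) (huu : betaF n u u = 0)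
    (huw : betaF n u w = 0) (hq : betaF n w w = 2 * q) :
    ∃ g : (Fin n → ℂ) ≃ₗ[ℂ] (Fin n → ℂ), g ∈ SOgrp n ∧
      ∀ x, g x = x + betaF n x u • w + (-(betaF n x w) - q * betaF n x u) • u := by
  have hwu : betaF n w u = 0 := by rw [betaF_symm', huw]
  have h1 : (betaFun n w) (-u) = 0 := by
    rw [map_neg]; simp [betaFun, huw]
  have h2 : (betaFun n u) (w + (-q) • u) = 0 := by
    show betaF n (w + (-q) • u) u = 0
    rw [betaF_add_left', betaF_smul_left', huu, hwu]; simp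
  have key : ∀ x, ((LinearEquiv.transvection h1).trans (LinearEquiv.transvection h2)) x
      = x + betaF n x u • w + (-(betaF n x w) - q * betaF n x u) • u := by
    intro x
    have e1 : ∀ y, (LinearEquiv.transvection h1) y = y + betaF n y w • (-u) := fun y => rfl
    have e2 : ∀ y, (LinearEquiv.transvection h2) y = y + betaF n y u • (w + (-q) • u) :=
      fun y => rfl
    rw [LinearEquiv.trans_apply, e1, e2]
    have : betaF n (x + betaF n x w • -u) u = betaF n x u := by
      rw [betaF_add_left', show betaF n x w • -u = (-(betaF n x w)) • u by simp,
        betaF_smul_left', huu]; simp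
    rw [this]
    module
  refine ⟨(LinearEquiv.transvection h1).trans (LinearEquiv.transvection h2), ⟨?_, ?_⟩, key⟩
  · have : ((LinearEquiv.transvection h1).trans (LinearEquiv.transvection h2)).toLinearMap
      = LinearMap.transvection (betaFun n u) (w + (-q) • u) ∘ₗ
          LinearMap.transvection (betaFun n w) (-u) := rfl
    rw [this, LinearMap.det_comp, LinearMap.transvection.det, LinearMap.transvection.det, h1, h2]
    simp
  · intro x y
    rw [key, key]
    simp only [betaF_add_left', betaF_smul_left', betaF_add_right', betaF_smul_right', huu, huw,
      hwu, hq, betaF_symm' n u y, betaF_symm' n w y]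
    ring

theorem stdVec_apply' (n m : ℕ) (j : Fin n) : stdVec n m j = if j.1 + 1 = m then 1 else 0 := by
  unfold stdVec
  split_ifs with h h2 h2
  · subst h2; simp
  · simp only [Pi.single_apply]; rw [if_neg]; intro h3; apply h2; rw [h3]; simp; omega
  · omega
  · rfl

theorem betaF_stdVec' (n m : ℕ) (h1 : 1 ≤ m) (h2 : m ≤ n) (x : Fin n → ℂ) :
    betaF n (stdVec n m) x = x ⟨n - m, by omega⟩ := by
  unfold betaF
  rw [Finset.sum_eq_single (⟨m - 1, by omega⟩ : Fin n)]
  · rw [stdVec_apply', if_pos (by simp; omega), one_mul]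
    congr 1; ext; simp [Fin.val_rev]; omega
  · intro b _ hb
    rw [stdVec_apply', if_neg, zero_mul]
    intro h; apply hb; ext; simp; omega
  · simp

theorem betaF_std_std (n m k : ℕ) (h1 : 1 ≤ m) (h2 : m ≤ n) :
    betaF n (stdVec n m) (stdVec n k) = if m + k = n + 1 then 1 else 0 := by
  rw [betaF_stdVec' n m h1 h2, stdVec_apply']
  simp only
  congr 1
  apply propext; omega

theorem mem_span_std (n : ℕ) (S : Set ℕ) (x : Fin n → ℂ) :
    x ∈ span ℂ (stdVec n '' S) ↔ ∀ j : Fin n, x j ≠ 0 → j.1 + 1 ∈ S := by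
  constructor
  · intro hx j
    contrapose!
    intro hj
    induction hx using Submodule.span_induction with
    | mem x h =>
      obtain ⟨m, hm, rfl⟩ := h
      rw [stdVec_apply', if_neg]
      rintro rfl; exact hj hm
    | zero => rfl
    | add x y _ _ hx hy => simp [hx, hy]
    | smul a x _ hx => simp [hx]
  · intro h
    have : x = ∑ j : Fin n, x j • stdVec n (j.1 + 1) := by
      ext k
      simp [Finset.sum_apply, stdVec_apply', Fin.val_inj]
    rw [this]
    refine Submodule.sum_mem _ fun j _ => ?_
    by_cases hj : x j = 0
    · simp [hj]
    · exact Submodule.smul_mem _ _ (subset_span ⟨_, h j hj, rfl⟩)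

theorem finrank_span_std (n : ℕ) (S : Finset ℕ) (hS : ∀ m ∈ S, 1 ≤ m ∧ m ≤ n) :
    finrank ℂ (span ℂ (stdVec n '' (S : Set ℕ))) = S.card := by
  have hli : LinearIndependent ℂ (fun m : S => stdVec n m.1) := by
    have := (Pi.basisFun ℂ (Fin n)).linearIndependent.comp
      (fun m : S => (⟨m.1 - 1, by have := hS m.1 m.2; omega⟩ : Fin n)) (by
        intro a b hab
        have h1 := hS a.1 a.2
        have h2 := hS b.1 b.2
        simp at hab
        ext; omega)
    convert this using 1
    ext m j
    have h1 := hS m.1 m.2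
    simp [stdVec, h1]
  have := finrank_span_eq_card hli
  rw [Fintype.card_coe] at this
  rw [← this]
  have hr : Set.range (fun m : S => stdVec n m.1) = stdVec n '' (S : Set ℕ) := by
    ext v; simp
  rw [hr]

theorem repE_std (l m : ℕ) : repEFlag l l m = span ℂ (stdVec (2 * l) '' Set.Icc 1 (min m l)) := by
  unfold repEFlag isoFlagOf
  congr 1
  apply Set.image_congr
  intro a ha
  unfold repEVec
  have := ha.2
  split_ifs with h1 h2
  · rfl
  · rw [h2]
  · omega

theorem repE_pred_mid (l : ℕ) (hl : 2 ≤ l) : repEFlag l (l - 1) (l - 1) =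
    span ℂ (stdVec (2 * l) '' (insert l (Finset.Icc 1 (l - 2)) : Finset ℕ)) := by
  unfold repEFlag isoFlagOf
  congr 1
  ext v
  simp only [Set.mem_image, Set.mem_Icc, Finset.coe_insert, Finset.coe_Icc, Set.mem_insert_iff]
  constructor
  · rintro ⟨m, ⟨h1, h2⟩, rfl⟩
    unfold repEVec
    split_ifs with h3 h4
    · exact ⟨m, by omega, rfl⟩
    · exact ⟨l, by omega, rfl⟩
    · omega
  · rintro ⟨m, h | h, rfl⟩
    · refine ⟨l - 1, by omega, ?_⟩
      simp [repEVec, h]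
    · refine ⟨m, by omega, ?_⟩
      simp only [repEVec]
      rw [if_pos (by omega)]

theorem repE_pred_ne (l : ℕ) (hl : 2 ≤ l) (m : ℕ) (hm : m ≠ l - 1) :
    repEFlag l (l - 1) m = repEFlag l l m := by
  rw [repE_std]
  unfold repEFlag isoFlagOf
  congr 1
  ext v
  simp only [Set.mem_image, Set.mem_Icc]
  constructor
  · rintro ⟨k, ⟨h1, h2⟩, rfl⟩
    unfold repEVec
    split_ifs with h3 h4
    · exact ⟨k, by omega, rfl⟩
    · exact ⟨l, by omega, rfl⟩
    · exact ⟨k - 1, by omega, rfl⟩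
  · rintro ⟨k, h, rfl⟩
    rcases lt_trichotomy k (l - 1) with h1 | h1 | h1
    · refine ⟨k, by omega, ?_⟩
      simp only [repEVec]
      rw [if_pos (by omega)]
    · refine ⟨l, by omega, ?_⟩
      simp only [repEVec]
      rw [if_neg (by omega), if_neg (by omega), h1]
    · refine ⟨l - 1, by omega, ?_⟩
      simp only [repEVec]
      rw [if_neg (by omega), if_pos trivial]
      congr 1; omega

theorem finrank_repE_std (l m : ℕ) : finrank ℂ (repEFlag l l m) = min m l := by
  rw [repE_std]
  have := finrank_span_std (2 * l) (Finset.Icc 1 (min m l)) (by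
    intro k hk; rw [Finset.mem_Icc] at hk; omega)
  rw [Finset.coe_Icc] at this
  rw [this]; simp

theorem finrank_repE_pred (l : ℕ) (hl : 2 ≤ l) (m : ℕ) :
    finrank ℂ (repEFlag l (l - 1) m) = min m l := by
  by_cases hm : m = l - 1
  · subst hm
    rw [repE_pred_mid l hl, finrank_span_std]
    · rw [Finset.card_insert_of_notMem (by simp; omega)]
      simp; omega
    · intro k hk
      simp only [Finset.mem_insert, Finset.mem_Icc] at hk
      omega
  · rw [repE_pred_ne l hl m hm, finrank_repE_std]

theorem isoFlagOf_mono (n l : ℕ) (v : ℕ → Fin n → ℂ) (i : ℕ) :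
    isoFlagOf n l v i ≤ isoFlagOf n l v (i + 1) := by
  apply span_mono
  apply Set.image_mono
  apply Set.Icc_subset_Icc le_rfl
  omega

theorem isoFlagOf_stable (n l : ℕ) (v : ℕ → Fin n → ℂ) (i : ℕ) (h : l ≤ i) :
    isoFlagOf n l v i = isoFlagOf n l v l := by
  unfold isoFlagOf
  rw [min_eq_right h, min_self]

theorem top_iso (l : ℕ) : ∀ u ∈ repEFlag l l l, ∀ w ∈ repEFlag l l l, betaF (2 * l) u w = 0 := by
  intro u hu w hw
  rw [repE_std, mem_span_std] at hu hw
  apply Finset.sum_eq_zero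
  intro k _
  by_contra h
  have h1 := hu k (left_ne_zero_of_mul h)
  have h2 := hw k.rev (right_ne_zero_of_mul h)
  simp only [Set.mem_Icc, Fin.val_rev] at h1 h2
  omega

theorem iso_std (l : ℕ) : IsIsoFlag (2 * l) l (repEFlag l l) := by
  refine ⟨fun i hi => ?_, fun i => isoFlagOf_mono _ _ _ i,
    fun i hi => isoFlagOf_stable _ _ _ i hi, top_iso l⟩
  rw [finrank_repE_std, min_eq_left hi]

theorem iso_pred (l : ℕ) (hl : 2 ≤ l) : IsIsoFlag (2 * l) l (repEFlag l (l - 1)) := by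
  refine ⟨fun i hi => ?_, fun i => isoFlagOf_mono _ _ _ i,
    fun i hi => isoFlagOf_stable _ _ _ i hi, ?_⟩
  · rw [finrank_repE_pred l hl, min_eq_left hi]
  · rw [repE_pred_ne l hl l (by omega)]
    exact top_iso l

theorem not_orbit (l : ℕ) (hl : 2 ≤ l) :
    ¬ InKEvenOrbit l (repEFlag l (l - 1)) (repEFlag l l) := by
  rintro ⟨g, ⟨⟨_, hg⟩, hd⟩, h⟩
  have h1 := congrFun h (l - 1)
  have h2 : g (stdVec (2 * l) l) ∈ repEFlag l l (l - 1) := by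
    rw [← h1]
    refine ⟨stdVec (2 * l) l, ?_, rfl⟩
    rw [repE_pred_mid l hl]
    exact subset_span ⟨l, by simp, rfl⟩
  rw [repE_std, mem_span_std] at h2
  have h3 := hg (stdVec (2 * l) l - stdVec (2 * l) (l + 1)) (stdVec (2 * l) l)
  rw [hd] at h3
  have e : ∀ x, betaF (2 * l) (stdVec (2 * l) l - stdVec (2 * l) (l + 1)) x =
      x ⟨2 * l - l, by omega⟩ - x ⟨2 * l - (l + 1), by omega⟩ := by
    intro x
    rw [← betaF_stdVec' (2 * l) l (by omega) (by omega) x,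
      ← betaF_stdVec' (2 * l) (l + 1) (by omega) (by omega) x]
    exact map_sub (betaFun (2 * l) x) _ _
  rw [e, e] at h3
  have a1 : g (stdVec (2 * l) l) ⟨2 * l - l, by omega⟩ = 0 := by
    by_contra hh
    have := (h2 _ hh).2
    simp only at this
    omega
  have a2 : g (stdVec (2 * l) l) ⟨2 * l - (l + 1), by omega⟩ = 0 := by
    by_contra hh
    have := (h2 _ hh).2
    simp only at this
    omega
  rw [a1, a2, stdVec_apply', stdVec_apply', if_neg (by simp only; omega),
    if_pos (by simp only; omega)] at h3
  norm_num at h3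

theorem exists_K (l : ℕ) (hl : 2 ≤ l) (a : ℂ) : ∃ g ∈ Keven l,
    (∀ m, 1 ≤ m → m < l → g (stdVec (2 * l) m) = stdVec (2 * l) m) ∧
    g (stdVec (2 * l) l) = stdVec (2 * l) l + a • stdVec (2 * l) (l - 1) := by
  have hb := fun m k h1 h2 => betaF_std_std (2 * l) m k h1 h2
  obtain ⟨g, hg, hx⟩ := exists_eichler (2 * l) (stdVec (2 * l) (l - 1))
    ((-a) • (stdVec (2 * l) l + stdVec (2 * l) (l + 1))) (a ^ 2)
    (by rw [hb _ _ (by omega) (by omega), if_neg (by omega)])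
    (by rw [betaF_smul_right', betaF_add_right', hb _ _ (by omega) (by omega),
          hb _ _ (by omega) (by omega), if_neg (by omega), if_neg (by omega)]; simp)
    (by
      rw [betaF_smul_right', betaF_smul_left', betaF_add_right', betaF_add_left', betaF_add_left',
        hb _ _ (by omega) (by omega), hb _ _ (by omega) (by omega), hb _ _ (by omega) (by omega),
        hb _ _ (by omega) (by omega), if_neg (by omega), if_pos (by omega), if_pos (by omega),
        if_neg (by omega)]
      ring)
  have g1 : ∀ m, 1 ≤ m → m < l → g (stdVec (2 * l) m) = stdVec (2 * l) m := by
    intro m h1 h2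
    rw [hx, betaF_smul_right', betaF_add_right', hb _ _ (by omega) (by omega),
      hb _ _ (by omega) (by omega), hb _ _ (by omega) (by omega), if_neg (by omega),
      if_neg (by omega), if_neg (by omega)]
    simp
  have g2 : g (stdVec (2 * l) l) = stdVec (2 * l) l + a • stdVec (2 * l) (l - 1) := by
    rw [hx, betaF_smul_right', betaF_add_right', hb _ _ (by omega) (by omega),
      hb _ _ (by omega) (by omega), hb _ _ (by omega) (by omega), if_neg (by omega),
      if_neg (by omega), if_pos (by omega)]
    simp
  have g3 : g (stdVec (2 * l) (l + 1)) =
      stdVec (2 * l) (l + 1) + a • stdVec (2 * l) (l - 1) := by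
    rw [hx, betaF_smul_right', betaF_add_right', hb _ _ (by omega) (by omega),
      hb _ _ (by omega) (by omega), hb _ _ (by omega) (by omega), if_neg (by omega),
      if_pos (by omega), if_neg (by omega)]
    simp
  refine ⟨g, ⟨hg, ?_⟩, g1, g2⟩
  rw [map_sub, g2, g3]
  abel

theorem orbit_of_mem (l : ℕ) (hl : 2 ≤ l) (V : ℕ → Submodule ℂ (Fin (2 * l) → ℂ))
    (hV : IsIsoFlag (2 * l) l V) (hm : ∀ m, m ≠ l - 1 → V m = repEFlag l l m)
    (hne : V ≠ repEFlag l l) : InKEvenOrbit l (repEFlag l (l - 1)) V := by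
  obtain ⟨hdim, hmono, _, _⟩ := hV
  have hnle : ¬ V (l - 1) ≤ repEFlag l l (l - 1) := by
    intro hle
    apply hne
    funext m
    by_cases h : m = l - 1
    · subst h
      apply Submodule.eq_of_le_of_finrank_eq hle
      rw [hdim _ (by omega), finrank_repE_std]
      omega
    · exact hm m h
  obtain ⟨x, hxV, hx⟩ := Set.not_subset.mp hnle
  have hxl : x ∈ repEFlag l l l := by
    rw [← hm l (by omega)]
    have := hmono (l - 1)
    rw [show l - 1 + 1 = l by omega] at this
    exact this hxV
  have hlow : repEFlag l l (l - 2) ≤ V (l - 1) := by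
    rw [← hm (l - 2) (by omega)]
    have := hmono (l - 2)
    rwa [show l - 2 + 1 = l - 1 by omega] at this
  rw [SetLike.mem_coe, repE_std, mem_span_std] at hx
  rw [repE_std, mem_span_std] at hxl
  set p : Fin (2 * l) := ⟨l - 1, by omega⟩ with hp
  set r : Fin (2 * l) := ⟨l - 2, by omega⟩ with hr
  have hxp : x p ≠ 0 := by
    intro h0
    apply hx
    intro j hj
    have h1 := hxl j hj
    have h2 : j.1 ≠ l - 1 := by
      intro h; apply hj; rw [← h0]; congr 1; ext; exact h
    simp only [Set.mem_Icc] at h1 ⊢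
    omega
  obtain ⟨g, hg, g1, g2⟩ := exists_K l hl (x r / x p)
  have hel : stdVec (2 * l) l + (x r / x p) • stdVec (2 * l) (l - 1) ∈ V (l - 1) := by
    have hdiff : (stdVec (2 * l) l + (x r / x p) • stdVec (2 * l) (l - 1)) - (x p)⁻¹ • x
        ∈ repEFlag l l (l - 2) := by
      rw [repE_std, mem_span_std]
      intro j hj
      by_cases hjp : j = p
      · exfalso; apply hj
        subst hjp
        simp only [Pi.sub_apply, Pi.add_apply, Pi.smul_apply, stdVec_apply', smul_eq_mul]
        rw [if_pos (by simp only [hp]; omega), if_neg (by simp only [hp]; omega)]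
        field_simp
        ring
      · by_cases hjr : j = r
        · exfalso; apply hj
          subst hjr
          simp only [Pi.sub_apply, Pi.add_apply, Pi.smul_apply, stdVec_apply', smul_eq_mul]
          rw [if_neg (by simp only [hr]; omega), if_pos (by simp only [hr]; omega)]
          field_simp
          ring
        · have n1 : j.1 ≠ l - 1 := fun h => hjp (Fin.ext h)
          have n2 : j.1 ≠ l - 2 := fun h => hjr (Fin.ext h)
          have hxj : x j ≠ 0 := by
            intro h0
            apply hj
            simp only [Pi.sub_apply, Pi.add_apply, Pi.smul_apply, stdVec_apply', smul_eq_mul, h0]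
            rw [if_neg (by omega), if_neg (by omega)]
            simp
          have := hxl j hxj
          simp only [Set.mem_Icc] at this ⊢
          omega
    have := (V (l - 1)).add_mem (hlow hdiff) ((V (l - 1)).smul_mem (x p)⁻¹ hxV)
    rwa [sub_add_cancel] at this
  refine ⟨g, hg, ?_⟩
  funext m
  have hVdim : finrank ℂ (V m) = min m l := by
    by_cases h : m = l - 1
    · rw [h, hdim _ (by omega)]; omega
    · rw [hm m h, finrank_repE_std]
  have hmapdim : finrank ℂ (actFlag (2 * l) g (repEFlag l (l - 1)) m) = min m l := by
    rw [← finrank_repE_pred l hl m]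
    exact LinearEquiv.finrank_map_eq g _
  apply Submodule.eq_of_le_of_finrank_eq _ (hmapdim.trans hVdim.symm)
  unfold actFlag
  rw [Submodule.map_le_iff_le_comap]
  by_cases h : m = l - 1
  · subst h
    rw [repE_pred_mid l hl, span_le]
    rintro _ ⟨k, hk, rfl⟩
    simp only [Finset.coe_insert, Finset.coe_Icc, Set.mem_insert_iff, Set.mem_Icc] at hk
    show g (stdVec (2 * l) k) ∈ V (l - 1)
    rcases hk with rfl | hk
    · rw [g2]; exact hel
    · rw [g1 k (by omega) (by omega)]
      apply hlow
      rw [repE_std]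
      exact subset_span ⟨k, by simp only [Set.mem_Icc]; omega, rfl⟩
  · rw [repE_pred_ne l hl m h, hm m h, repE_std, span_le]
    rintro _ ⟨k, hk, rfl⟩
    rw [Set.mem_Icc] at hk
    show g (stdVec (2 * l) k) ∈ span ℂ (stdVec (2 * l) '' Set.Icc 1 (min m l))
    by_cases hkl : k = l
    · rw [hkl, g2]
      exact add_mem (subset_span ⟨l, by simp only [Set.mem_Icc]; omega, rfl⟩)
        (Submodule.smul_mem _ _ (subset_span ⟨l - 1, by simp only [Set.mem_Icc]; omega, rfl⟩))
    · rw [g1 k (by omega) (by omega)]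
      exact subset_span ⟨k, by simp only [Set.mem_Icc]; omega, rfl⟩

theorem one_mem_K (l : ℕ) : LinearEquiv.refl ℂ (Fin (2 * l) → ℂ) ∈ Keven l := by
  refine ⟨⟨?_, fun x y => rfl⟩, rfl⟩
  exact LinearMap.det_id

/-- If a maximal isotropic flag in `ℂ^{2l}` agrees with the standard flag
`F_l = repEFlag l l` in every degree `m ≠ l-1`, then either it equals `F_l` or it lies
in the `K`-orbit of `F_{l-1} = repEFlag l (l-1)`, and not both; moreover both
possibilities occur (the root `α_{l-1}` is complex stable for `Q_+` and
`m(s_{α_{l-1}}) * Q_+ = Q_{l-1}`). -/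
theorem stmt_17 (l : ℕ) (hl : 2 ≤ l) :
    (∀ V : ℕ → Submodule ℂ (Fin (2 * l) → ℂ), IsIsoFlag (2 * l) l V →
      (∀ m, m ≠ l - 1 → V m = repEFlag l l m) →
      (V = repEFlag l l ∧ ¬ InKEvenOrbit l (repEFlag l (l - 1)) V) ∨
        (V ≠ repEFlag l l ∧ InKEvenOrbit l (repEFlag l (l - 1)) V)) ∧
    (∃ V, IsIsoFlag (2 * l) l V ∧ (∀ m, m ≠ l - 1 → V m = repEFlag l l m) ∧
      V = repEFlag l l) ∧
    (∃ V, IsIsoFlag (2 * l) l V ∧ (∀ m, m ≠ l - 1 → V m = repEFlag l l m) ∧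
      InKEvenOrbit l (repEFlag l (l - 1)) V) := by

  refine ⟨fun V hV hm => ?_, ⟨_, iso_std l, fun _ _ => rfl, rfl⟩,
    ⟨_, iso_pred l hl, fun m h => repE_pred_ne l hl m h, LinearEquiv.refl ℂ _, one_mem_K l, ?_⟩⟩
  · by_cases h : V = repEFlag l l
    · left
      refine ⟨h, ?_⟩
      rw [h]
      exact not_orbit l hl
    · exact Or.inr ⟨h, orbit_of_mem l hl V hV hm h⟩
  · funext m
    exact Submodule.map_id _
end
end
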